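/- arXiv:1812.03268 — 2 statements merged into one kernel-verified Lean document; each statement's English description precedes it below -/
import Mathlib

section
/- With the bosonic Fock space V and normal-ordered modes as defined (n ≥ 2), define for k ∈ ℤ the operators A_{n−1}(k) := :eps_{n−1} eps_{n−1}*:(k) − :eps_n eps_n*:(k) − :epsb_{n−1} epsb_{n−1}*:(k) + :epsb_n epsb_n*:(k) and A_n(k) := :eps_n eps_n*:(k) − :epsb_n epsb_n*:(k). Then for all k, l ∈ ℤ, [A_{n−1}(k), A_n(l)] = 2k·δ_{k,−l}·id_V. -/
/-!
For a symbol `s`, write `H_s(k) = :s s*:(k)`. These currents satisfy Heisenberg relations of level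
`-1`, namely `[H_s(k), H_t(l)] = -k δ_{s,t} δ_{k,-l}` (`NO_bracket`). The bracket in the theorem is
bilinear in such currents, and only the two pairs built from `eps_n` and from `epsb_n` contribute,
each with sign `-1`, which gives `2k δ_{k,-l}`.

For the Heisenberg relations, the canonical commutation relations (`opOf_comm`) yield
`[H_s(k), b(j)] = ±b(j + k)` or `0` for every generator `b(j)` (`NO_comm`). By the Jacobi identity,
`[H_s(k), H_t(l)]` commutes with all multiplications by variables and all partial derivatives, so it
is a scalar, equal to its vacuum expectation value (`scalar_of_comm`). That value is computed from
the finite sum of quadratic monomials `H_t(l) 1` (`NO_one`, `vev`); for `s = t` and `k + l = 0` the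
result `-(max k 0) + max l 0` is `-k`.
-/

noncomputable section

open MvPolynomial

/-- The index set `S` of bosonic symbols: `c`, `eps_1, …, eps_{n+2}`, `epsb_1, …, epsb_{n+2}`.
We index `eps_i` (resp. `epsb_i`) for `1 ≤ i ≤ n+2` by `Fin (n+2)` via `i-1`. -/
abbrev BSym (n : ℕ) := Unit ⊕ (Fin (n+2) ⊕ Fin (n+2))

/-- `W n` is the ℂ-span of `S ∪ S*`; `Sum.inl` indexes `S`, `Sum.inr` indexes `S*`. -/
abbrev W (n : ℕ) := (BSym n ⊕ BSym n) → ℂ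

/-- the symbol `c` -/
def cSym (n : ℕ) : BSym n := Sum.inl ()
/-- the symbol `eps_i`, `1 ≤ i ≤ n+2` (indexed by `i-1 : Fin (n+2)`) -/
def epsSym (n : ℕ) (i : Fin (n+2)) : BSym n := Sum.inr (Sum.inl i)
/-- the symbol `epsb_i`, `1 ≤ i ≤ n+2` (indexed by `i-1 : Fin (n+2)`) -/
def epsbSym (n : ℕ) (i : Fin (n+2)) : BSym n := Sum.inr (Sum.inr i)

/-- a plain (unstarred) symbol, as an element of the span `W n` of `S ∪ S*` -/
def pl {n : ℕ} (s : BSym n) : W n := Pi.single (Sum.inl s) 1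
/-- a starred symbol, as an element of the span `W n` of `S ∪ S*` -/
def st {n : ℕ} (s : BSym n) : W n := Pi.single (Sum.inr s) 1

/-- embed the span of `S` into `W n` (the identity of the span of `S`) -/
def plV {n : ℕ} (u : BSym n → ℂ) : W n := Sum.elim u 0
/-- the ℂ-linear star map from the span of `S` to `W n` -/
def stV {n : ℕ} (u : BSym n → ℂ) : W n := Sum.elim 0 u

/-- The symmetric bilinear form `(·|·)` on the span of `S`:
`(eps_a|eps_b) = (epsb_a|epsb_b) = δ_{ab}` and all other pairs (including `c`) pair to `0`. -/
def symForm {n : ℕ} (u v : BSym n → ℂ) : ℂ :=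
  ∑ i : Fin (n+2), (u (epsSym n i) * v (epsSym n i) + u (epsbSym n i) * v (epsbSym n i))

/-- weight used to define the antisymmetric pairing -/
def wt {n : ℕ} : BSym n → ℂ := Sum.elim (fun _ => 0) (fun _ => 1)

/-- The antisymmetric pairing `⟨·,·⟩` on `W n`:
`⟨u, v*⟩ = −(u|v) = −⟨v*, u⟩`, `⟨u, v⟩ = ⟨u*, v*⟩ = 0` for `u, v` in the span of `S`. -/
def pair {n : ℕ} (U V : W n) : ℂ :=
  ∑ s : BSym n, wt s * (U (Sum.inr s) * V (Sum.inl s) - U (Sum.inl s) * V (Sum.inr s))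

/-- The bosonic Fock space: a polynomial algebra in variables `x_{u,j}`,
`u ∈ S ∪ S*`, `j ∈ ℤ+1/2`, `j > 0`; the positive half-integer `j = k + 1/2` is
represented by `k : ℕ`. -/
abbrev Fock (n : ℕ) := MvPolynomial ((BSym n ⊕ BSym n) × ℕ) ℂ

/-- The operator `u(j)` for a basis symbol `u ∈ S ∪ S*` and half-integer `j = m + 1/2`
(`m : ℤ`): for `j < 0`, multiplication by `x_{u,-j}`; for `j > 0`,
`u(j) = -∂/∂x_{u*,j}` (`u ∈ S`) and `u*(j) = ∂/∂x_{u,j}` (`u ∈ S`). -/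
def opOf {n : ℕ} (b : BSym n ⊕ BSym n) (m : ℤ) : Module.End ℂ (Fock n) :=
  if m < 0 then LinearMap.mulLeft ℂ (X (b, (-m-1).toNat))
  else match b with
    | Sum.inl s => - (pderiv ((Sum.inr s : BSym n ⊕ BSym n), m.toNat)).toLinearMap
    | Sum.inr s => (pderiv ((Sum.inl s : BSym n ⊕ BSym n), m.toNat)).toLinearMap

/-- The operator `u(j)`, `j = m + 1/2`, for `u` in the span `W n` of `S ∪ S*`,
extended ℂ-linearly in `u`. -/
def op {n : ℕ} (u : W n) (m : ℤ) : Module.End ℂ (Fock n) :=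
  ∑ b : BSym n ⊕ BSym n, u b • opOf b m

/-- The summand `:u(j) v(M−j):` of the normal-ordered mode, `j = m + 1/2`:
`u(j)v(M−j)` if `j < 0` and `v(M−j)u(j)` if `j > 0` (note `M - j = (M-m-1) + 1/2`). -/
def nterm {n : ℕ} (u v : W n) (M m : ℤ) : Module.End ℂ (Fock n) :=
  if m < 0 then op u m * op v (M - m - 1) else op v (M - m - 1) * op u m

/-- The normal-ordered mode `:u v:(M) = Σ_{j ∈ ℤ+1/2} :u(j) v(M−j):`.  On each
polynomial only finitely many summands act nonzero; the resulting linear operator is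
defined here by its (finite, via `finsum`) values on the monomial basis. -/
def NO {n : ℕ} (u v : W n) (M : ℤ) : Module.End ℂ (Fock n) :=
  (basisMonomials ((BSym n ⊕ BSym n) × ℕ) ℂ).constr ℂ
    (fun d => ∑ᶠ m : ℤ, nterm u v M m ((monomial d) (1 : ℂ)))

/-! ### Canonical commutation relations -/

/-- The commutation scalar of two basis symbols: `[b(j), b'(-j)] = kap b b'`. -/
def kap {n : ℕ} : BSym n ⊕ BSym n → BSym n ⊕ BSym n → ℂ
  | Sum.inl s, Sum.inr t => if s = t then -1 else 0
  | Sum.inr s, Sum.inl t => if s = t then 1 else 0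
  | _, _ => 0

theorem pderiv_pderiv_swap {σ : Type*} (i j : σ) (f : MvPolynomial σ ℂ) :
    pderiv i (pderiv j f) = pderiv j (pderiv i f) := by
  classical
  have h : ⁅pderiv (R := ℂ) i, pderiv (R := ℂ) j⁆ = 0 := by
    apply MvPolynomial.derivation_ext
    intro a
    rw [Derivation.commutator_apply, pderiv_X, pderiv_X]
    by_cases h1 : i = a <;> by_cases h2 : j = a <;> simp [h1, h2]
  have h2 := congrArg (fun D => D f) h
  simpa [Derivation.commutator_apply, sub_eq_zero] using h2

theorem kap_swap {n : ℕ} (b b' : BSym n ⊕ BSym n) : kap b b' = -kap b' b := by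
  rcases b with s | s <;> rcases b' with t | t <;> by_cases h : s = t <;>
    simp [kap, h, eq_comm (a := t)]

theorem opOf_comm_of_nonneg_of_neg {n : ℕ} (b b' : BSym n ⊕ BSym n) (m p : ℤ) (hm : ¬ m < 0)
    (hp : p < 0) (f : Fock n) :
    opOf b m (opOf b' p f)
      = opOf b' p (opOf b m f) + (if m + p + 1 = 0 then kap b b' else 0) • f := by
  classical
  have h : m + p + 1 = 0 ↔ (-p - 1).toNat = m.toNat := by omega
  simp only [h, opOf, if_neg hm, if_pos hp]
  generalize (-p - 1).toNat = a
  generalize m.toNat = c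
  rcases b with s | s <;> rcases b' with t | t <;> by_cases h2 : a = c <;> by_cases hst : t = s <;>
    simp [kap, pderiv_X, h2, hst, eq_comm (a := s), add_comm]

/-- The canonical commutation relations. The mode indices `m`, `p` stand for the half-integers
`m + 1/2`, `p + 1/2`, which add up to zero exactly when `m + p + 1 = 0`. -/
theorem opOf_comm {n : ℕ} (b b' : BSym n ⊕ BSym n) (m p : ℤ) (f : Fock n) :
    opOf b m (opOf b' p f)
      = opOf b' p (opOf b m f) + (if m + p + 1 = 0 then kap b b' else 0) • f := by
  by_cases hm : m < 0 <;> by_cases hp : p < 0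
  · have h : ¬ (m + p + 1 = 0) := by omega
    simp [opOf, hm, hp, h]
    ring
  · rw [opOf_comm_of_nonneg_of_neg b' b p m hp hm, kap_swap b b', add_comm p m]
    split_ifs <;> simp
  · exact opOf_comm_of_nonneg_of_neg b b' m p hm hp f
  · have h : ¬ (m + p + 1 = 0) := by omega
    rcases b with s | s <;> rcases b' with t | t <;>
      simp [opOf, hm, hp, h] <;> exact pderiv_pderiv_swap _ _ _

theorem opOf_one {n : ℕ} (b : BSym n ⊕ BSym n) (m : ℤ) (hm : 0 ≤ m) :
    opOf b m (1 : Fock n) = 0 := by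
  rcases b with s | s <;> simp [opOf, not_lt.2 hm]

theorem constantCoeff_opOf {n : ℕ} (b : BSym n ⊕ BSym n) (m : ℤ) (hm : m < 0) (f : Fock n) :
    constantCoeff (opOf b m f) = 0 := by
  simp [opOf, hm]

/-- Annihilation operators of index beyond all variables occurring in `f` kill `f`; this is what
makes the normal-ordered sums finite. -/
theorem exists_opOf_eq_zero {n : ℕ} (f : Fock n) :
    ∃ N : ℤ, 0 ≤ N ∧ ∀ b m, N ≤ m → opOf b m f = 0 := by
  classical
  refine ⟨((f.vars.image Prod.snd).sup id + 1 : ℕ), by positivity, fun b m hm => ?_⟩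
  have hm0 : ¬ m < 0 := by omega
  have key : ∀ b', pderiv (b', m.toNat) f = 0 := by
    intro b'
    apply pderiv_eq_zero_of_notMem_vars
    intro hmem
    have : m.toNat ≤ (f.vars.image Prod.snd).sup id :=
      Finset.le_sup (f := id) (Finset.mem_image_of_mem Prod.snd hmem)
    omega
  rcases b with s | s <;> simp [opOf, hm0, key]

/-! ### The current modes on arbitrary polynomials -/

theorem op_single {n : ℕ} (b : BSym n ⊕ BSym n) (m : ℤ) :
    op (Pi.single b 1 : W n) m = opOf b m := by
  simp [op, Pi.single_apply]

theorem nterm_apply {n : ℕ} (s : BSym n) (M m : ℤ) (f : Fock n) :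
    nterm (pl s) (st s) M m f = if m < 0 then opOf (Sum.inl s) m (opOf (Sum.inr s) (M - m - 1) f)
      else opOf (Sum.inr s) (M - m - 1) (opOf (Sum.inl s) m f) := by
  unfold nterm pl st
  rw [op_single, op_single]
  split_ifs <;> rfl

theorem nterm_finite {n : ℕ} (s : BSym n) (M : ℤ) (f : Fock n) :
    (fun m => nterm (pl s) (st s) M m f).HasFiniteSupport := by
  obtain ⟨N, hN0, hN⟩ := exists_opOf_eq_zero f
  refine (Set.finite_Icc (M - N - 1) N).subset fun m hm => ?_
  by_contra hc
  apply hm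
  simp only [Set.mem_Icc, not_and_or, not_le] at hc
  simp only [nterm_apply]
  split_ifs with h
  · rw [hN (Sum.inr s) (M - m - 1) (by omega), map_zero]
  · by_cases h2 : N ≤ m
    · rw [hN (Sum.inl s) m h2, map_zero]
    · rw [opOf_comm, hN (Sum.inr s) (M - m - 1) (by omega), map_zero, zero_add,
        if_neg (by omega), zero_smul]

/-- The defining series of a mode, valid on every polynomial and not only on monomials. -/
theorem NO_apply {n : ℕ} (s : BSym n) (M : ℤ) (f : Fock n) :
    NO (pl s) (st s) M f = ∑ᶠ m : ℤ, nterm (pl s) (st s) M m f := by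
  induction f using MvPolynomial.induction_on' with
  | monomial d a =>
    have h : (monomial d a : Fock n) = a • basisMonomials _ ℂ d := by
      simp [smul_monomial]
    rw [h, map_smul, NO, Module.Basis.constr_basis]
    simp only [map_smul]
    rw [smul_finsum]
    simp
  | add p q hp hq =>
    simp only [map_add]
    rw [finsum_add_distrib (nterm_finite s M p) (nterm_finite s M q), hp, hq]

/-! ### Commutators with the generators -/

/-- The charge of a basis symbol under the modes `:s s*:(M)`. -/
def chg {n : ℕ} (s : BSym n) : BSym n ⊕ BSym n → ℂ
  | Sum.inl t => if s = t then 1 else 0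
  | Sum.inr t => if s = t then -1 else 0

/-- Normal ordering changes a summand only by a scalar, hence it does not affect commutators. -/
theorem nterm_comm {n : ℕ} (s : BSym n) (M m p : ℤ) (b : BSym n ⊕ BSym n) (f : Fock n) :
    nterm (pl s) (st s) M m (opOf b p f) - opOf b p (nterm (pl s) (st s) M m f)
      = (if M - m - 1 + p + 1 = 0 then kap (Sum.inr s) b else 0) • opOf (Sum.inl s) m f
        + (if m + p + 1 = 0 then kap (Sum.inl s) b else 0) • opOf (Sum.inr s) (M - m - 1) f := by
  simp only [nterm_apply]
  split_ifs with h
  all_goals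
    simp only [opOf_comm _ b _ p, map_add, map_smul]
    simp_all
    try abel

/-- `[:s s*:(M), b(j)] = chg s b • b(j + M)`: at most one summand of the mode fails to commute with
`b(j)`. -/
theorem NO_comm {n : ℕ} (s : BSym n) (M p : ℤ) (b : BSym n ⊕ BSym n) (f : Fock n) :
    NO (pl s) (st s) M (opOf b p f)
      = opOf b p (NO (pl s) (st s) M f) + chg s b • opOf b (p + M) f := by
  rw [← sub_eq_iff_eq_add', NO_apply, NO_apply, map_finsum _ (nterm_finite s M f),
    ← finsum_sub_distrib (nterm_finite s M _)
      ((nterm_finite s M f).subset fun m hm h => hm (by simp [h]))]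
  simp only [nterm_comm]
  -- A plain `b` meets only the starred factor, at `m = p + M`; a starred `b` only the plain
  -- factor, at `m = -p - 1`.
  rcases b with t | t
  · rw [finsum_eq_single _ (p + M)]
    · rw [if_pos (by omega)]
      by_cases h : s = t <;> simp [kap, chg, h]
    · intro m hm
      rw [if_neg (by omega)]
      simp [kap]
  · rw [finsum_eq_single _ (-p - 1)]
    · rw [if_pos (c := -p - 1 + p + 1 = 0) (by omega), show M - (-p - 1) - 1 = p + M by ring]
      by_cases h : s = t <;> simp [kap, chg, h]
    · intro m hm
      rw [if_neg (c := m + p + 1 = 0) (by omega)]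
      simp [kap]

/-! ### Vacuum expectation values and the Heisenberg relations -/

/-- On the vacuum only the summands made of two creation operators survive. -/
theorem NO_one {n : ℕ} (s : BSym n) (M : ℤ) :
    NO (pl s) (st s) M (1 : Fock n)
      = ∑ m ∈ Finset.Ico M 0, opOf (Sum.inl s) m (opOf (Sum.inr s) (M - m - 1) 1) := by
  rw [NO_apply, finsum_eq_sum_of_support_subset (s := Finset.Ico M 0)]
  · refine Finset.sum_congr rfl fun m hm => ?_
    rw [nterm_apply, if_pos (Finset.mem_Ico.1 hm).2]
  · intro m hm
    by_contra hc
    apply hm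
    simp only [Finset.coe_Ico, Set.mem_Ico, not_and_or, not_le, not_lt] at hc
    simp only [nterm_apply]
    split_ifs with h
    · rw [opOf_one _ (M - m - 1) (by omega), map_zero]
    · rw [opOf_one _ m (by omega), map_zero]

/-- The vacuum expectation value of a product of two modes. For `s = t` and `k + l = 0`, each of
the `(-l).toNat = k.toNat` summands of `:t t*:(l)` on the vacuum contributes `-1`. -/
theorem vev {n : ℕ} (s t : BSym n) (k l : ℤ) :
    constantCoeff (NO (pl s) (st s) k (NO (pl t) (st t) l (1 : Fock n)))
      = if s = t ∧ k + l = 0 then -(k.toNat : ℂ) else 0 := by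
  have key : ∀ m ∈ Finset.Ico l 0, constantCoeff (NO (pl s) (st s) k
      (opOf (Sum.inl t) m (opOf (Sum.inr t) (l - m - 1) (1 : Fock n))))
      = if s = t ∧ k + l = 0 then -1 else 0 := by
    intro m hm
    obtain ⟨h1, h2⟩ := Finset.mem_Ico.1 hm
    rw [NO_comm, map_add, constantCoeff_opOf _ _ h2, zero_add, smul_eq_C_mul, map_mul,
      constantCoeff_C]
    by_cases h3 : m + k < 0
    · rw [constantCoeff_opOf _ _ h3, if_neg (by omega), mul_zero]
    · rw [opOf_comm, opOf_one _ (m + k) (by omega), map_zero, zero_add, smul_eq_C_mul, mul_one,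
        constantCoeff_C]
      have h4 : m + k + (l - m - 1) + 1 = 0 ↔ k + l = 0 := by omega
      by_cases hs : s = t <;> simp [h4, chg, kap, hs]
  rw [NO_one, map_sum, map_sum, Finset.sum_congr rfl key, Finset.sum_const, Int.card_Ico]
  split_ifs with h
  · have : (-l).toNat = k.toNat := by omega
    simp [this]
  · simp

/-- Schur's lemma for the Fock space: an operator commuting with all `b(j)` is a scalar,
namely its vacuum expectation value. -/
theorem scalar_of_comm {n : ℕ} (T : Module.End ℂ (Fock n))
    (hT : ∀ b p f, T (opOf b p f) = opOf b p (T f)) :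
    T = constantCoeff (T 1) • (1 : Module.End ℂ (Fock n)) := by
  have hX : ∀ i f, T (X i * f) = X i * T f := by
    rintro ⟨b, j⟩ f
    have := hT b (-(j : ℤ) - 1) f
    have hj : -(j : ℤ) - 1 < 0 := by omega
    simpa [opOf, hj] using this
  have hD : ∀ i, pderiv i (T 1) = 0 := by
    rintro ⟨b | b, j⟩
    · have hj : ¬ (j : ℤ) < 0 := by omega
      simpa [opOf, hj] using (hT (Sum.inr b) j 1).symm
    · have hj : ¬ (j : ℤ) < 0 := by omega
      simpa [opOf, hj] using (hT (Sum.inl b) j 1).symm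
  have h1 : T 1 = C (constantCoeff (T 1)) := by
    ext d
    rw [coeff_C]
    split_ifs with h
    · rw [← h]; rfl
    · obtain ⟨i, hi⟩ : ∃ i, d i ≠ 0 := by
        by_contra! hc
        exact h (by ext i; simp [hc i])
      have h2 := coeff_pderiv (i := i) (T 1) (d - Finsupp.single i 1)
      have h3 : d - Finsupp.single i 1 + Finsupp.single i 1 = d :=
        tsub_add_cancel_of_le (by simpa using Nat.one_le_iff_ne_zero.2 hi)
      rw [hD, h3, coeff_zero] at h2
      rcases mul_eq_zero.1 h2.symm with h4 | h4
      · exact h4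
      · exact absurd h4 (Nat.cast_add_one_ne_zero _)
  refine LinearMap.ext fun f => ?_
  induction f using MvPolynomial.induction_on with
  | C a =>
    have : (C a : Fock n) = a • 1 := by simp [smul_eq_C_mul]
    rw [this, map_smul, map_smul, LinearMap.smul_apply, Module.End.one_apply,
      smul_eq_C_mul (1 : Fock n) (constantCoeff _), mul_one, ← h1]
  | add p q hp hq => rw [map_add, map_add, hp, hq]
  | mul_X p i hp =>
    rw [mul_comm p, hX, hp]
    simp

/-- The Heisenberg relations, of level `-1`, for the currents `:s s*:`. -/
theorem NO_bracket {n : ℕ} (s t : BSym n) (k l : ℤ) :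
    NO (pl s) (st s) k * NO (pl t) (st t) l - NO (pl t) (st t) l * NO (pl s) (st s) k
      = (if s = t ∧ k + l = 0 then -(k : ℂ) else 0) • (1 : Module.End ℂ (Fock n)) := by
  rw [scalar_of_comm (NO (pl s) (st s) k * NO (pl t) (st t) l
    - NO (pl t) (st t) l * NO (pl s) (st s) k)]
  · congr 1
    simp only [LinearMap.sub_apply, Module.End.mul_apply, map_sub, vev]
    by_cases h : s = t ∧ k + l = 0
    · rw [if_pos h, if_pos ⟨h.1.symm, by omega⟩, if_pos h]
      have : (k : ℂ) = (k.toNat : ℂ) - (l.toNat : ℂ) := by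
        have h2 : k = (k.toNat : ℤ) - (l.toNat : ℤ) := by omega
        exact_mod_cast congrArg (Int.cast : ℤ → ℂ) h2
      rw [this]; ring
    · rw [if_neg h, if_neg (fun h' => h ⟨h'.1.symm, by omega⟩), if_neg h, sub_zero]
  -- Jacobi identity: both double brackets with `b(j)` equal `chg s b * chg t b • b(j + k + l)`.
  · intro b p f
    simp only [LinearMap.sub_apply, Module.End.mul_apply, NO_comm, map_add, map_sub, map_smul,
      smul_add]
    rw [show p + l + k = p + k + l by ring, smul_comm (chg t b) (chg s b)]
    abel

/-- with `A_{n−1}(k) := :eps_{n−1} eps_{n−1}*:(k) − :eps_n eps_n*:(k)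
− :epsb_{n−1} epsb_{n−1}*:(k) + :epsb_n epsb_n*:(k)` and
`A_n(k) := :eps_n eps_n*:(k) − :epsb_n epsb_n*:(k)`, one has
`[A_{n−1}(k), A_n(l)] = 2k δ_{k,−l} id_V`. -/
theorem bosonic_alpha_bracket (n : ℕ) (hn : 2 ≤ n) (k l : ℤ) :
    (NO (pl (epsSym n ⟨n-2, by omega⟩)) (st (epsSym n ⟨n-2, by omega⟩)) k
      - NO (pl (epsSym n ⟨n-1, by omega⟩)) (st (epsSym n ⟨n-1, by omega⟩)) k
      - NO (pl (epsbSym n ⟨n-2, by omega⟩)) (st (epsbSym n ⟨n-2, by omega⟩)) k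
      + NO (pl (epsbSym n ⟨n-1, by omega⟩)) (st (epsbSym n ⟨n-1, by omega⟩)) k)
    * (NO (pl (epsSym n ⟨n-1, by omega⟩)) (st (epsSym n ⟨n-1, by omega⟩)) l
      - NO (pl (epsbSym n ⟨n-1, by omega⟩)) (st (epsbSym n ⟨n-1, by omega⟩)) l)
    - (NO (pl (epsSym n ⟨n-1, by omega⟩)) (st (epsSym n ⟨n-1, by omega⟩)) l
      - NO (pl (epsbSym n ⟨n-1, by omega⟩)) (st (epsbSym n ⟨n-1, by omega⟩)) l)
    * (NO (pl (epsSym n ⟨n-2, by omega⟩)) (st (epsSym n ⟨n-2, by omega⟩)) k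
      - NO (pl (epsSym n ⟨n-1, by omega⟩)) (st (epsSym n ⟨n-1, by omega⟩)) k
      - NO (pl (epsbSym n ⟨n-2, by omega⟩)) (st (epsbSym n ⟨n-2, by omega⟩)) k
      + NO (pl (epsbSym n ⟨n-1, by omega⟩)) (st (epsbSym n ⟨n-1, by omega⟩)) k)
    = ((2 * k : ℂ) * (if k = -l then 1 else 0)) • (1 : Module.End ℂ (Fock n)) := by
  have e12 : epsSym n ⟨n-2, by omega⟩ ≠ epsSym n ⟨n-1, by omega⟩ := by
    simp [epsSym]; omega
  have b12 : epsbSym n ⟨n-2, by omega⟩ ≠ epsbSym n ⟨n-1, by omega⟩ := by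
    simp [epsbSym]; omega
  have eb : ∀ i j, epsSym n i ≠ epsbSym n j := by simp [epsSym, epsbSym]
  have be : ∀ i j, epsbSym n i ≠ epsSym n j := by simp [epsSym, epsbSym]
  have expand : ∀ E₁ E₂ B₁ B₂ E B : Module.End ℂ (Fock n),
      (E₁ - E₂ - B₁ + B₂) * (E - B) - (E - B) * (E₁ - E₂ - B₁ + B₂)
        = (E₁ * E - E * E₁) - (E₂ * E - E * E₂) - (B₁ * E - E * B₁) + (B₂ * E - E * B₂)
          - ((E₁ * B - B * E₁) - (E₂ * B - B * E₂) - (B₁ * B - B * B₁) + (B₂ * B - B * B₂)) := by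
    intros
    simp only [mul_sub, sub_mul, mul_add, add_mul]
    abel
  rw [expand]
  simp only [NO_bracket, e12, b12, eb, be, false_and, true_and, if_false, zero_smul,
    ← eq_neg_iff_add_eq_zero]
  split_ifs
  · module
  · simp
end
end

section
/- With the bosonic Fock space V and normal-ordered modes as defined (n ≥ 2), define for k ∈ ℤ the operator X_n(k) := √2·(:eps_n eps_{n+1}*:(k) − :eps_{n+1} epsb_n*:(k)). Then for all k, l ∈ ℤ, [X_n(k), X_n(l)] = 0. -/
/-!
Write `e = eps_n`, `f = eps_{n+1}`, `g = epsb_n`, `A(k) = :e f*:(k)` and `B(k) = :f g*:(k)`, so that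
`X_n(k) = √2 (A(k) - B(k))`.  The only non-commuting modes among those of `e`, `f`, `f*`, `g*` are
the conjugate pairs `f*(j)`, `f(-j)` (`opOf_comm`, `opOf_conj`); in particular normal ordering is
immaterial in `A` and `B`.

Every polynomial is killed by all modes of large index, so a normal-ordered mode acts on any
polynomial as a finite sum, and the commutator of a fixed operator with it can be computed termwise
(`NO_comm_apply`).  Hence `[f(r), A(k)] = -e(k+r)`, the `A`'s commute among themselves, so do the
`B`'s, and `[A(k), B(l)] = :e g*:(k+l)` (`bracket_A_B`).  The last expression is symmetric in `k`
and `l`, so the two cross terms of `[X_n(k), X_n(l)]` cancel.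
-/

noncomputable section

open MvPolynomial

/-- the symbol `eps_i` for `1 ≤ i ≤ n+2`, taking a natural-number index
(out-of-range indices are reduced mod `n+2`; all uses below are in range) -/
def epsN (n i : ℕ) : BSym n := epsSym n ⟨(i-1) % (n+2), Nat.mod_lt _ (by omega)⟩

/-- the symbol `epsb_i` for `1 ≤ i ≤ n+2`, taking a natural-number index
(out-of-range indices are reduced mod `n+2`; all uses below are in range) -/
def epsbN (n i : ℕ) : BSym n := epsbSym n ⟨(i-1) % (n+2), Nat.mod_lt _ (by omega)⟩

/-- the operator `X_n(k) := √2 (:eps_n eps_{n+1}*:(k) − :eps_{n+1} epsb_n*:(k))` -/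
def XnMode (n : ℕ) (k : ℤ) : Module.End ℂ (Fock n) :=
  (Real.sqrt 2 : ℂ) • (NO (pl (epsN n n)) (st (epsN n (n+1))) k
    - NO (pl (epsN n (n+1))) (st (epsbN n n)) k)

section BosonicBracket

/-- Partial derivatives commute, as linear endomorphisms. -/
lemma pderiv_comm_end {σ : Type*} (i j : σ) :
    Commute (S := Module.End ℂ (MvPolynomial σ ℂ))
      (pderiv (R := ℂ) i).toLinearMap (pderiv (R := ℂ) j).toLinearMap := by
  classical
  have h : ⁅pderiv (R := ℂ) i, pderiv (R := ℂ) j⁆ = 0 := by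
    apply MvPolynomial.derivation_ext
    intro a
    simp [Derivation.commutator_apply, pderiv_X, Pi.single_apply, apply_ite]
  apply LinearMap.ext
  intro p
  have := congrArg (fun D => D p) h
  simpa [Derivation.commutator_apply, sub_eq_zero] using this

lemma mulLeft_comm_end {σ : Type*} (a b : MvPolynomial σ ℂ) :
    Commute (S := Module.End ℂ (MvPolynomial σ ℂ))
      (LinearMap.mulLeft ℂ a) (LinearMap.mulLeft ℂ b) := by
  apply LinearMap.ext
  intro p
  simp [mul_left_comm]

lemma pderiv_mulLeft_comm {σ : Type*} {i j : σ} (h : i ≠ j) :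
    Commute (S := Module.End ℂ (MvPolynomial σ ℂ)) (pderiv (R := ℂ) i).toLinearMap
      (LinearMap.mulLeft ℂ (X j : MvPolynomial σ ℂ)) := by
  classical
  apply LinearMap.ext
  intro p
  simp [Derivation.leibniz, pderiv_X_of_ne h.symm]

lemma end_neg_left {σ : Type*} {f g : Module.End ℂ (MvPolynomial σ ℂ)} (h : Commute f g) :
    Commute (-f) g := by
  apply LinearMap.ext
  intro p
  have := LinearMap.congr_fun h.eq p
  simpa using this

lemma ring_expand {R : Type*} [Ring R] (A B A' B' : R) :
    (A - B) * (A' - B') - (A' - B') * (A - B)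
      = (A * A' - A' * A) + (B * B' - B' * B)
        + ((A' * B - B * A') - (A * B' - B' * A)) := by
  noncomm_ring

/-- A mode of nonnegative index is, up to sign, the derivative along the conjugate variable. -/
lemma opOf_nonneg {n : ℕ} (b : BSym n ⊕ BSym n) {m : ℤ} (hm : ¬ m < 0) :
    opOf b m = (pderiv (b.swap, m.toNat)).toLinearMap ∨
      opOf b m = -(pderiv (b.swap, m.toNat)).toLinearMap := by
  rcases b with s | s
  · exact Or.inr (if_neg hm)
  · exact Or.inl (if_neg hm)

/-- To commute with a mode of nonnegative index, it suffices to commute with the corresponding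
derivative. -/
lemma opOf_commute_of_pderiv {n : ℕ} {b : BSym n ⊕ BSym n} {m : ℤ} (hm : ¬ m < 0)
    {T : Module.End ℂ (Fock n)}
    (h : Commute (S := Module.End ℂ (Fock n)) (pderiv (b.swap, m.toNat)).toLinearMap T) :
    Commute (opOf b m) T := by
  rcases opOf_nonneg b hm with e | e
  · rw [e]
    exact h
  · rw [e]
    exact end_neg_left h

/-- Modes of two symbols commute unless one symbol is the star of the other. -/
lemma opOf_comm_s10 {n : ℕ} {b b' : BSym n ⊕ BSym n} (h : b' ≠ b.swap) (m m' : ℤ) :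
    Commute (opOf b m) (opOf b' m') := by
  have h' : b ≠ b'.swap := by
    rintro rfl
    simp at h
  have hneg : ∀ (c : BSym n ⊕ BSym n) {i : ℤ}, i < 0 →
      opOf c i = LinearMap.mulLeft ℂ (X (c, (-i - 1).toNat)) := fun c i hi => if_pos hi
  by_cases hm : m < 0
  · by_cases hm' : m' < 0
    · rw [hneg b hm, hneg b' hm']
      exact mulLeft_comm_end _ _
    · rw [hneg b hm]
      exact (opOf_commute_of_pderiv hm'
        (pderiv_mulLeft_comm fun hh => h' (Prod.ext_iff.1 hh).1.symm)).symm
  · refine opOf_commute_of_pderiv hm ?_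
    by_cases hm' : m' < 0
    · rw [hneg b' hm']
      exact pderiv_mulLeft_comm fun hh => h (Prod.ext_iff.1 hh).1.symm
    · exact (opOf_commute_of_pderiv hm' (pderiv_comm_end _ _)).symm

/-- The canonical commutation relation `[u*(a), u(b)] = δ_{a,-b}`; the half-integers `a + 1/2` and
`b + 1/2` are opposite exactly when `a + b = -1`. -/
lemma opOf_conj {n : ℕ} (s : BSym n) (a b : ℤ) :
    opOf (Sum.inr s) a * opOf (Sum.inl s) b - opOf (Sum.inl s) b * opOf (Sum.inr s) a
      = if a + b = -1 then 1 else 0 := by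
  unfold opOf
  by_cases ha : a < 0 <;> by_cases hb : b < 0 <;> simp only [ha, hb, if_true, if_false]
  · rw [if_neg (by omega), sub_eq_zero]
    exact mulLeft_comm_end _ _
  · split_ifs with hab
    · have : b.toNat = (-a - 1).toNat := by omega
      apply LinearMap.ext
      intro p
      simp [Derivation.leibniz, this]
    · rw [sub_eq_zero]
      refine (end_neg_left (pderiv_mulLeft_comm fun hh => hab ?_)).symm
      have := (Prod.ext_iff.1 hh).2
      simp only at this
      omega
  · split_ifs with hab
    · have : a.toNat = (-b - 1).toNat := by omega
      apply LinearMap.ext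
      intro p
      simp [Derivation.leibniz, this]
    · rw [sub_eq_zero]
      refine pderiv_mulLeft_comm fun hh => hab ?_
      have := (Prod.ext_iff.1 hh).2
      simp only at this
      omega
  · rw [if_neg (by omega), sub_eq_zero]
    exact (end_neg_left (pderiv_comm_end _ _)).symm

lemma op_pl {n : ℕ} (s : BSym n) (m : ℤ) : op (pl s) m = opOf (Sum.inl s) m := by
  simp [op, pl, Pi.single_apply]

lemma op_st {n : ℕ} (s : BSym n) (m : ℤ) : op (st s) m = opOf (Sum.inr s) m := by
  simp [op, st, Pi.single_apply]

/-- A polynomial involves finitely many variables, so all modes of large index annihilate it. -/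
lemma op_locally_zero {n : ℕ} (p : Fock n) :
    ∃ N : ℤ, ∀ (u : W n) (m : ℤ), N ≤ m → op u m p = 0 := by
  classical
  refine ⟨(p.vars.sup Prod.snd : ℕ) + 1, fun u m hm => ?_⟩
  have key : ∀ b, pderiv (R := ℂ) (b, m.toNat) p = 0 := fun b => by
    apply pderiv_eq_zero_of_notMem_vars
    intro hmem
    have h1 : m.toNat ≤ p.vars.sup Prod.snd := Finset.le_sup (f := Prod.snd) hmem
    omega
  have hm0 : ¬ m < 0 := by omega
  have : ∀ b, opOf (n := n) b m p = 0 := by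
    rintro (s | s) <;> simp [opOf, hm0, key]
  simp [op, LinearMap.sum_apply, this]

lemma nterm_finite_s10 {n : ℕ} (u v : W n) (M : ℤ) (p : Fock n) :
    (Function.support fun m => nterm u v M m p).Finite := by
  obtain ⟨N, hN⟩ := op_locally_zero p
  refine (Set.finite_Icc (min (M - N) 0) (max N 0)).subset fun m hm => ?_
  by_contra hout
  apply hm
  rw [Set.mem_Icc] at hout
  by_cases h0 : m < 0
  · simp [nterm, h0, hN v (M - m - 1) (by omega)]
  · simp [nterm, h0, hN u m (by omega)]

/-- The normal-ordered mode, defined on monomials, acts by the same locally finite sum on every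
polynomial. -/
lemma NO_apply_s10 {n : ℕ} (u v : W n) (M : ℤ) (p : Fock n) :
    NO u v M p = ∑ᶠ m : ℤ, nterm u v M m p := by
  induction p using MvPolynomial.induction_on' with
  | monomial d a =>
    have h : (monomial d a : Fock n) = a • monomial d (1 : ℂ) := by simp [smul_monomial]
    have hb : NO u v M (monomial d (1 : ℂ)) = ∑ᶠ m : ℤ, nterm u v M m (monomial d (1 : ℂ)) := by
      have := (basisMonomials ((BSym n ⊕ BSym n) × ℕ) ℂ).constr_basis ℂ
        (fun d => ∑ᶠ m : ℤ, nterm u v M m ((monomial d) (1 : ℂ))) d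
      rwa [coe_basisMonomials] at this
    simp only [h, map_smul, hb, smul_finsum]
  | add p q hp hq =>
    simp only [map_add, hp, hq]
    rw [finsum_add_distrib (nterm_finite_s10 u v M p) (nterm_finite_s10 u v M q)]

/-- The commutator of any operator with a normal-ordered mode is computed termwise. -/
lemma NO_comm_apply {n : ℕ} (T : Module.End ℂ (Fock n)) (u v : W n) (M : ℤ) (p : Fock n) :
    (T * NO u v M - NO u v M * T) p
      = ∑ᶠ m : ℤ, (T * nterm u v M m - nterm u v M m * T) p := by
  have h1 := nterm_finite_s10 u v M p
  have h2 := nterm_finite_s10 u v M (T p)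
  simp only [LinearMap.sub_apply, Module.End.mul_apply, NO_apply_s10]
  rw [finsum_sub_distrib (h1.subset fun m hm h0 => hm (by simp [h0])) h2]
  congr 1
  exact (T.toAddMonoidHom.map_finsum h1)

lemma nterm_pl_st {n : ℕ} {s t : BSym n} (h : s ≠ t) (M m : ℤ) :
    nterm (pl s) (st t) M m = opOf (Sum.inl s) m * opOf (Sum.inr t) (M - m - 1) := by
  have hc : Commute (opOf (Sum.inl s) m) (opOf (Sum.inr t) (M - m - 1)) :=
    opOf_comm_s10 (by simpa using h.symm) _ _
  simp only [nterm, op_pl, op_st]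
  split_ifs
  · rfl
  · exact hc.eq.symm

lemma commute_NO {n : ℕ} {T : Module.End ℂ (Fock n)} {s t : BSym n} (h : s ≠ t)
    (hs : ∀ m, Commute T (opOf (Sum.inl s) m)) (ht : ∀ m, Commute T (opOf (Sum.inr t) m))
    (M : ℤ) : Commute T (NO (pl s) (st t) M) := by
  refine sub_eq_zero.1 (LinearMap.ext fun p => ?_)
  rw [NO_comm_apply]
  have : ∀ m, T * nterm (pl s) (st t) M m - nterm (pl s) (st t) M m * T = 0 := fun m => by
    rw [nterm_pl_st h]
    exact sub_eq_zero.2 ((hs m).mul_right (ht _)).eq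
  simp [this]

/-- `[t(r), :s t*:(k)] = -s(k+r)`: a single summand of the mode contributes. -/
lemma bracket_mode_A {n : ℕ} {s t : BSym n} (h : s ≠ t) (k r : ℤ) :
    opOf (Sum.inl t) r * NO (pl s) (st t) k - NO (pl s) (st t) k * opOf (Sum.inl t) r
      = -opOf (Sum.inl s) (k + r) := by
  refine LinearMap.ext fun p => ?_
  rw [NO_comm_apply]
  have key : ∀ m, opOf (Sum.inl t) r * nterm (pl s) (st t) k m
      - nterm (pl s) (st t) k m * opOf (Sum.inl t) r
      = -(opOf (Sum.inl s) m * if k - m - 1 + r = -1 then 1 else 0) := fun m => by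
    have hc : opOf (Sum.inl t) r * opOf (Sum.inl s) m
        = opOf (Sum.inl s) m * opOf (Sum.inl t) r := (opOf_comm_s10 (by simp) _ _).eq
    rw [nterm_pl_st h, ← opOf_conj t, ← mul_assoc, hc]
    simp only [mul_sub, mul_assoc, neg_sub]
  simp only [key]
  rw [finsum_eq_single _ (k + r)]
  · rw [if_pos (by ring), mul_one]
  · intro m hm
    rw [if_neg (by omega)]
    simp

/-- `[:s t*:(k), :t r*:(l)] = :s r*:(k+l)` for distinct symbols `s`, `t`, `r`. -/
lemma bracket_A_B {n : ℕ} {s t r : BSym n} (hst : s ≠ t) (htr : t ≠ r) (hsr : s ≠ r) (k l : ℤ) :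
    NO (pl s) (st t) k * NO (pl t) (st r) l - NO (pl t) (st r) l * NO (pl s) (st t) k
      = NO (pl s) (st r) (k + l) := by
  refine LinearMap.ext fun p => ?_
  rw [NO_comm_apply, NO_apply_s10]
  have hr : ∀ m, NO (pl s) (st t) k * opOf (Sum.inr r) m
      = opOf (Sum.inr r) m * NO (pl s) (st t) k := fun m =>
    (commute_NO hst (fun _ => opOf_comm_s10 (by simpa using hsr) _ _)
      (fun _ => opOf_comm_s10 (by simp) _ _) k).symm.eq
  -- The shift of the summation index by `k` matches `s(k+m) r*(l-m-1)` with the modes of total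
  -- degree `k + l`.
  rw [← finsum_comp_equiv (Equiv.addLeft k) (f := fun m => nterm (pl s) (st r) (k + l) m p)]
  refine finsum_congr fun m => ?_
  simp only [Equiv.coe_addLeft]
  congr 1
  rw [nterm_pl_st htr, nterm_pl_st hsr,
    show k + l - (k + m) - 1 = l - m - 1 by ring, ← neg_neg (opOf (Sum.inl s) (k + m)),
    ← bracket_mode_A hst, mul_assoc _ _ (NO _ _ _), ← hr, neg_sub, sub_mul,
    mul_assoc, mul_assoc]

lemma epsN_ne (n : ℕ) (hn : 2 ≤ n) : epsN n n ≠ epsN n (n + 1) := by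
  simp only [epsN, epsSym, ne_eq, Sum.inr.injEq, Sum.inl.injEq, Fin.mk.injEq]
  rw [Nat.mod_eq_of_lt (by omega), Nat.mod_eq_of_lt (by omega)]
  omega

lemma epsN_ne_epsbN (n i j : ℕ) : epsN n i ≠ epsbN n j := by
  simp [epsN, epsbN, epsSym, epsbSym]

/-- Modes of `:s t*:` commute with each other when `s ≠ t`. -/
lemma commute_NO_NO {n : ℕ} {s t : BSym n} (h : s ≠ t) (k l : ℤ) :
    Commute (NO (pl s) (st t) k) (NO (pl s) (st t) l) :=
  commute_NO h
    (fun _ => (commute_NO h (fun _ => opOf_comm_s10 (by simp) _ _)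
      (fun _ => opOf_comm_s10 (by simpa using h.symm) _ _) k).symm)
    (fun _ => (commute_NO h (fun _ => opOf_comm_s10 (by simpa using h) _ _)
      (fun _ => opOf_comm_s10 (by simp) _ _) k).symm) l

end BosonicBracket

/-- `[X_n(k), X_n(l)] = 0`. -/
theorem bosonic_Xn_Xn_bracket (n : ℕ) (hn : 2 ≤ n) (k l : ℤ) :
    XnMode n k * XnMode n l - XnMode n l * XnMode n k = 0 := by
  have hst := epsN_ne n hn
  have htr := epsN_ne_epsbN n (n + 1) n
  have hsr := epsN_ne_epsbN n n n
  have hA := (commute_NO_NO hst k l).eq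
  have hB := (commute_NO_NO htr k l).eq
  have h1 := bracket_A_B hst htr hsr k l
  have h2 := bracket_A_B hst htr hsr l k
  rw [add_comm l k, ← h1] at h2
  unfold XnMode
  refine sub_eq_zero.2 (((?_ : Commute _ _).smul_left _).smul_right _).eq
  generalize NO (pl (epsN n n)) (st (epsN n (n+1))) k = A at *
  generalize NO (pl (epsN n n)) (st (epsN n (n+1))) l = A' at *
  generalize NO (pl (epsN n (n+1))) (st (epsbN n n)) k = B at *
  generalize NO (pl (epsN n (n+1))) (st (epsbN n n)) l = B' at *
  refine sub_eq_zero.1 ?_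
  rw [ring_expand, hA, hB, h2]
  simp
end
end
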